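/- arXiv:1006.5097 — 2 statements merged into one kernel-verified Lean document; each statement's English description precedes it below -/
import Mathlib

section
/- Let k ≥ 1 and let y, z : ℕ → Fin k be balanced infinite color sequences. Then every infinite color sequence x that is a shuffle of y and z is balanced. -/
open Filter Topology

/-- Number of indices `i < n` with `x i = a`. -/
def cnt {k : ℕ} (x : ℕ → Fin k) (a : Fin k) (n : ℕ) : ℕ :=
  ((Finset.range n).filter fun i => x i = a).card

/-- Color `a` has frequency `r` in `x`. -/
def HasFreq {k : ℕ} (x : ℕ → Fin k) (a : Fin k) (r : ℝ) : Prop :=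
  Tendsto (fun n : ℕ => (cnt x a n : ℝ) / (n : ℝ)) atTop (𝓝 r)

/-- Every color has frequency `1/k`. -/
def BalancedSeq {k : ℕ} (x : ℕ → Fin k) : Prop :=
  ∀ a : Fin k, HasFreq x a (1 / (k : ℝ))

/-- `s` is the infinite concatenation of the finite words `w 0, w 1, w 2, …`. -/
def IsConcat {k : ℕ} (w : ℕ → List (Fin k)) (s : ℕ → Fin k) : Prop :=
  Tendsto (fun n : ℕ => ∑ i ∈ Finset.range n, (w i).length) atTop atTop ∧
  ∀ (n j : ℕ) (hj : j < (w n).length),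
    s ((∑ i ∈ Finset.range n, (w i).length) + j) = (w n).get ⟨j, hj⟩

/-- `x` is a shuffle of `y` and `z`. -/
def IsShuffle {k : ℕ} (x y z : ℕ → Fin k) : Prop :=
  ∃ w : ℕ → List (Fin k),
    IsConcat w x ∧ IsConcat (fun n => w (2 * n)) y ∧
      IsConcat (fun n => w (2 * n + 1)) z

/-!
Every prefix of a shuffle `x` of `y` and `z` is, up to reordering, a prefix of `y` followed by a
prefix of `z`. The color `a` has frequency `r` in a sequence exactly when the discrepancy
`n ↦ |x^{≤n}|_a - r n` is `o(n)`. Hence the discrepancy of `x` at `n` is the sum of the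
discrepancies of `y` and `z` at some `p` and `q` with `p + q = n`. Each of these is `o(n)`: a large
index contributes `o(n)`, and the discrepancies at the finitely many small indices are bounded.
-/

open Asymptotics

/-- The prefix `s 0, …, s (n - 1)` of the infinite sequence `s`, written `s^{≤n}` in the paper. -/
def prefixWord {α : Type*} (s : ℕ → α) (n : ℕ) : List α :=
  (List.range n).map s

section Words

variable {α : Type*}

lemma length_prefixWord (s : ℕ → α) (n : ℕ) : (prefixWord s n).length = n := by
  simp only [prefixWord, List.length_map, List.length_range]

lemma prefixWord_add (s : ℕ → α) (m n : ℕ) :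
    prefixWord s (m + n) = prefixWord s m ++ prefixWord (fun i => s (m + i)) n := by
  simp only [prefixWord, List.range_add, List.map_append, List.map_map, Function.comp_def]

lemma flatMap_range_succ (w : ℕ → List α) (n : ℕ) :
    (List.range (n + 1)).flatMap w = (List.range n).flatMap w ++ w n := by
  rw [List.range_succ, List.flatMap_append, List.flatMap_singleton]

lemma flatMap_range_two_mul (w : ℕ → List α) (n : ℕ) :
    (List.range (2 * n)).flatMap w =
      (List.range n).flatMap fun i => w (2 * i) ++ w (2 * i + 1) := by
  induction n with
  | zero => rfl
  | succ n ih =>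
    rw [mul_add_one, flatMap_range_succ, flatMap_range_succ, flatMap_range_succ, ih,
      List.append_assoc]

lemma flatMap_range_two_mul_perm (w : ℕ → List α) (n : ℕ) :
    ((List.range (2 * n)).flatMap w).Perm
      ((List.range n).flatMap (fun i => w (2 * i)) ++
        (List.range n).flatMap (fun i => w (2 * i + 1))) := by
  rw [flatMap_range_two_mul]
  exact (List.flatMap_append_perm _ _ _).symm

lemma append_append_perm_right_comm (u v w : List α) : (u ++ v ++ w).Perm (u ++ w ++ v) := by
  rw [List.append_assoc, List.append_assoc]
  exact List.perm_append_comm.append_left u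

end Words

lemma exists_le_lt_succ_of_tendsto_atTop {β : Type*} [LinearOrder β] [NoMaxOrder β] {f : ℕ → β}
    (hf : Tendsto f atTop atTop) {b : β} (hb : f 0 ≤ b) : ∃ m, f m ≤ b ∧ b < f (m + 1) := by
  by_contra! hstep
  have hbdd : ∀ m, f m ≤ b := fun m => Nat.rec hb hstep m
  obtain ⟨m, hm⟩ := (hf.eventually_gt_atTop b).exists
  exact (hbdd m).not_gt hm

namespace IsConcat

variable {k : ℕ} {w : ℕ → List (Fin k)} {s : ℕ → Fin k}

lemma prefixWord_sum_length_add (h : IsConcat w s) {m j : ℕ} (hj : j ≤ (w m).length) :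
    prefixWord s (∑ i ∈ Finset.range m, (w i).length + j) =
      prefixWord s (∑ i ∈ Finset.range m, (w i).length) ++ (w m).take j := by
  rw [prefixWord_add]
  congr 1
  refine List.ext_getElem ?_ fun i hi hi' => ?_
  · rw [length_prefixWord, List.length_take_of_le hj]
  · rw [length_prefixWord] at hi
    simpa only [prefixWord, List.getElem_map, List.getElem_range, List.getElem_take,
      List.get_eq_getElem] using h.2 m i (hi.trans_le hj)

lemma prefixWord_sum_length (h : IsConcat w s) (m : ℕ) :
    prefixWord s (∑ i ∈ Finset.range m, (w i).length) = (List.range m).flatMap w := by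
  induction m with
  | zero => rfl
  | succ m ih =>
    rw [Finset.sum_range_succ, h.prefixWord_sum_length_add le_rfl, List.take_length, ih,
      flatMap_range_succ]

lemma exists_eq_sum_length_add (h : IsConcat w s) (n : ℕ) :
    ∃ m j, j ≤ (w m).length ∧ n = ∑ i ∈ Finset.range m, (w i).length + j := by
  obtain ⟨m, hle, hlt⟩ := exists_le_lt_succ_of_tendsto_atTop h.1 (Nat.zero_le n)
  rw [Finset.sum_range_succ] at hlt
  exact ⟨m, n - ∑ i ∈ Finset.range m, (w i).length, by omega, by omega⟩

end IsConcat

lemma IsShuffle.exists_prefixWord_perm {k : ℕ} {x y z : ℕ → Fin k} (h : IsShuffle x y z) (n : ℕ) :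
    ∃ p q, (prefixWord x n).Perm (prefixWord y p ++ prefixWord z q) := by
  obtain ⟨w, hx, hy, hz⟩ := h
  obtain ⟨m, j, hj, rfl⟩ := hx.exists_eq_sum_length_add n
  rw [hx.prefixWord_sum_length_add hj, hx.prefixWord_sum_length]
  obtain ⟨t, rfl | rfl⟩ := m.even_or_odd'
  · refine ⟨∑ i ∈ Finset.range t, (w (2 * i)).length + j,
      ∑ i ∈ Finset.range t, (w (2 * i + 1)).length, ?_⟩
    rw [hy.prefixWord_sum_length_add hj, hy.prefixWord_sum_length, hz.prefixWord_sum_length]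
    exact ((flatMap_range_two_mul_perm w t).append_right _).trans
      (append_append_perm_right_comm _ _ _)
  · refine ⟨∑ i ∈ Finset.range (t + 1), (w (2 * i)).length,
      ∑ i ∈ Finset.range t, (w (2 * i + 1)).length + j, ?_⟩
    rw [hz.prefixWord_sum_length_add hj, hy.prefixWord_sum_length, hz.prefixWord_sum_length,
      flatMap_range_succ, flatMap_range_succ, ← List.append_assoc]
    exact (((flatMap_range_two_mul_perm w t).append_right _).trans
      (append_append_perm_right_comm _ _ _)).append_right _

lemma count_prefixWord {k : ℕ} (x : ℕ → Fin k) (a : Fin k) (n : ℕ) :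
    (prefixWord x n).count a = cnt x a n := by
  rw [prefixWord, List.count, List.countP_map, List.countP_eq_length_filter]
  rfl

lemma hasFreq_iff_isLittleO {k : ℕ} {x : ℕ → Fin k} {a : Fin k} {r : ℝ} :
    HasFreq x a r ↔ (fun n : ℕ => (cnt x a n : ℝ) - r * n) =o[atTop] fun n : ℕ => (n : ℝ) := by
  have hne : ∀ᶠ n : ℕ in atTop, (n : ℝ) ≠ 0 :=
    (eventually_ne_atTop 0).mono fun _ => Nat.cast_ne_zero.mpr
  rw [isLittleO_iff_tendsto' (hne.mono fun _ hn h0 => absurd h0 hn), HasFreq,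
    ← tendsto_sub_nhds_zero_iff]
  refine tendsto_congr' (hne.mono fun n hn => ?_)
  simp only [sub_div, mul_div_cancel_right₀ r hn]

lemma isLittleO_comp_of_le_self {E : Type*} [SeminormedAddCommGroup E] {g : ℕ → E} {u : ℕ → ℝ}
    (hg : g =o[atTop] u) (hu : Monotone u) (hu_top : Tendsto u atTop atTop) {p : ℕ → ℕ}
    (hp : ∀ n, p n ≤ n) : (fun n => g (p n)) =o[atTop] u := by
  refine isLittleO_iff.mpr fun ε hε => ?_
  obtain ⟨N, hN⟩ := eventually_atTop.mp
    ((isLittleO_iff.mp hg hε).and (hu_top.eventually_ge_atTop 0))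
  have hsmall : ∀ᶠ n in atTop, ∑ m ∈ Finset.range N, ‖g m‖ ≤ ε * u n :=
    (hu_top.const_mul_atTop hε).eventually_ge_atTop _
  filter_upwards [hsmall, hu_top.eventually_ge_atTop 0] with n hn hu_nonneg
  rw [Real.norm_of_nonneg hu_nonneg]
  rcases lt_or_ge (p n) N with hlt | hge
  · exact (Finset.single_le_sum (fun m _ => norm_nonneg (g m)) (Finset.mem_range.mpr hlt)).trans hn
  · obtain ⟨hgp, hup⟩ := hN (p n) hge
    calc ‖g (p n)‖ ≤ ε * ‖u (p n)‖ := hgp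
      _ = ε * u (p n) := by rw [Real.norm_of_nonneg hup]
      _ ≤ ε * u n := by gcongr; exact hu (hp n)

theorem shuffle_of_balanced_is_balanced_general {k : ℕ} {x y z : ℕ → Fin k} {a : Fin k} {r : ℝ}
    (hy : HasFreq y a r) (hz : HasFreq z a r) (hx : IsShuffle x y z) : HasFreq x a r := by
  choose p q hperm using hx.exists_prefixWord_perm
  have hlength : ∀ n, n = p n + q n := fun n => by
    simpa only [List.length_append, length_prefixWord] using (hperm n).length_eq
  have hcount : ∀ n, cnt x a n = cnt y a (p n) + cnt z a (q n) := fun n => by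
    simpa only [List.count_append, count_prefixWord] using (hperm n).count_eq a
  rw [hasFreq_iff_isLittleO] at hy hz ⊢
  have hy' := isLittleO_comp_of_le_self hy Nat.mono_cast tendsto_natCast_atTop_atTop
    fun n => (Nat.le_add_right _ _).trans_eq (hlength n).symm
  have hz' := isLittleO_comp_of_le_self hz Nat.mono_cast tendsto_natCast_atTop_atTop
    fun n => (Nat.le_add_left _ _).trans_eq (hlength n).symm
  refine (hy'.add hz').congr_left fun n => ?_
  have hcast : (n : ℝ) = p n + q n := mod_cast hlength n
  rw [hcount, hcast]
  push_cast
  ring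

theorem shuffle_of_balanced_is_balanced {k : ℕ} (hk : 1 ≤ k)
    (y z : ℕ → Fin k) (hy : BalancedSeq y) (hz : BalancedSeq z)
    (x : ℕ → Fin k) (hx : IsShuffle x y z) : BalancedSeq x :=
  fun a => shuffle_of_balanced_is_balanced_general (hy a) (hz a) hx
end

section
/- Let G = (A, W_bn) be a k-colored game whose goal W_bn is the set of all bounded color sequences. Then G is determined, and if player 1 has a winning strategy, then player 1 has a memoryless winning strategy. -/
open Filter Topology

/-- `diff_{a,b}(x^{≤n})`. -/
def diffSeq {k : ℕ} (x : ℕ → Fin k) (a b : Fin k) (n : ℕ) : ℤ :=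
  (cnt x a n : ℤ) - (cnt x b n : ℤ)

/-- Bounded difference property. -/
def BoundedSeq {k : ℕ} (x : ℕ → Fin k) : Prop :=
  ∃ C : ℕ, ∀ (a b : Fin k) (n : ℕ), |diffSeq x a b n| ≤ (C : ℤ)

/-- A `k`-colored arena on node type `V`: a partition of the nodes given by the
predicate `isV1` (player 1's nodes; player 0 owns the rest), an initial node
and a serial set of colored edges `(source, color, target)`. -/
structure Arena (V : Type) (k : ℕ) where
  isV1 : V → Prop
  vini : V
  E : Set (V × Fin k × V)
  serial : ∀ v : V, ∃ e ∈ E, e.1 = v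

namespace Arena

variable {V : Type} {k : ℕ}

/-- The last node of a finite history (the target of its last edge), `vini`
for the empty history. -/
def lastNode (A : Arena V k) (l : List (V × Fin k × V)) : V :=
  (l.getLast?.map fun e => e.2.2).getD A.vini

/-- A valid finite history: a finite path from `vini` along edges of the arena. -/
def IsHistory (A : Arena V k) (l : List (V × Fin k × V)) : Prop :=
  (∀ e ∈ l, e ∈ A.E) ∧ List.Chain' (fun e f => e.2.2 = f.1) l ∧
    ∀ e, l.head? = some e → e.1 = A.vini

/-- `σ` is a strategy for the player owning the nodes satisfying `inP`:
on every valid history ending in a node of that player (including the empty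
history when `vini` is such a node) it returns an edge of the arena extending
the history. -/
def IsStrategy (A : Arena V k) (inP : V → Prop)
    (σ : List (V × Fin k × V) → V × Fin k × V) : Prop :=
  ∀ l, A.IsHistory l → inP (A.lastNode l) → σ l ∈ A.E ∧ (σ l).1 = A.lastNode l

/-- An infinite play: an infinite path along edges of the arena starting at `vini`. -/
def IsPlay (A : Arena V k) (p : ℕ → V × Fin k × V) : Prop :=
  (p 0).1 = A.vini ∧ ∀ i : ℕ, p i ∈ A.E ∧ (p i).2.2 = (p (i + 1)).1

/-- The play `p` is consistent with the strategy `σ` of the player owning the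
nodes satisfying `inP`. -/
def Consistent (A : Arena V k) (inP : V → Prop)
    (σ : List (V × Fin k × V) → V × Fin k × V) (p : ℕ → V × Fin k × V) : Prop :=
  (inP A.vini → p 0 = σ []) ∧
    ∀ i : ℕ, inP ((p i).2.2) → p (i + 1) = σ (List.ofFn fun j : Fin (i + 1) => p j)

/-- The color sequence of a play. -/
def colorSeq (p : ℕ → V × Fin k × V) : ℕ → Fin k := fun i => (p i).2.1

/-- Player 0's nodes. -/
def isV0 (A : Arena V k) : V → Prop := fun v => ¬ A.isV1 v

/-- `σ` is a winning strategy for player 0 w.r.t. the goal `W`. -/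
def WinningFor0 (A : Arena V k) (W : Set (ℕ → Fin k))
    (σ : List (V × Fin k × V) → V × Fin k × V) : Prop :=
  A.IsStrategy A.isV0 σ ∧
    ∀ p : ℕ → V × Fin k × V, A.IsPlay p → A.Consistent A.isV0 σ p → colorSeq p ∈ W

/-- `σ` is a winning strategy for player 1 w.r.t. the goal `W`. -/
def WinningFor1 (A : Arena V k) (W : Set (ℕ → Fin k))
    (σ : List (V × Fin k × V) → V × Fin k × V) : Prop :=
  A.IsStrategy A.isV1 σ ∧
    ∀ p : ℕ → V × Fin k × V, A.IsPlay p → A.Consistent A.isV1 σ p → colorSeq p ∉ W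

/-- A strategy is memoryless if its value on a (valid) history only depends on
the last node of the history. -/
def Memoryless (A : Arena V k) (σ : List (V × Fin k × V) → V × Fin k × V) : Prop :=
  ∀ l l', A.IsHistory l → A.IsHistory l' → A.lastNode l = A.lastNode l' → σ l = σ l'

end Arena

/-!
A configuration is a node together with the vector counting the colors seen so far. Player 0 wins
once there is an invariant set of configurations in which the color differences are bounded.

Split the moves of player 1 at a single node `u` into two parts, and suppose there is a bounded
invariant against each part. Then there is one against all the moves: run a play of each kind, and
at `u` let the move of player 1 decide which of the two is continued while the other waits at `u`.
The count vectors of the two plays add up, so the differences stay bounded. Hence, if there is no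
bounded invariant, moves of player 1 can be discarded until exactly one remains at each of
its nodes, without a bounded invariant appearing. The resulting memoryless strategy wins, since a
bounded play consistent with it would itself trace out a bounded invariant.
-/

/-- The first `n` terms of an infinite sequence, in the form in which a play is presented to a
strategy. -/
def playPrefix {α : Type*} (p : ℕ → α) (n : ℕ) : List α :=
  List.ofFn fun j : Fin n => p j

theorem playPrefix_succ {α : Type*} (p : ℕ → α) (n : ℕ) :
    playPrefix p (n + 1) = playPrefix p n ++ [p n] := by
  rw [playPrefix, List.ofFn_succ_last]
  rfl

theorem exists_eq_apply_playPrefix {α : Type*} (ρ : List α → α) :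
    ∃ p : ℕ → α, ∀ n, p n = ρ (playPrefix p n) := by
  let H : ℕ → List α := fun n => (fun l => l ++ [ρ l])^[n] []
  have H_eq_playPrefix : ∀ n, H n = playPrefix (fun m => ρ (H m)) n := by
    intro n
    induction n with
    | zero => rfl
    | succ n ih => rw [playPrefix_succ, ← ih]; exact Function.iterate_succ_apply' _ n []
  exact ⟨fun n => ρ (H n), fun n => congrArg ρ (H_eq_playPrefix n)⟩

theorem exists_injOn_subset_not_of_union {α β : Type*} (π : α → β) {P : Set α → Prop}
    (hP : ∀ (u : β) (F₁ F₂ : Set α), (∀ e, π e ≠ u → (e ∈ F₁ ↔ e ∈ F₂)) →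
      P F₁ → P F₂ → P (F₁ ∪ F₂))
    {E : Set α} (hfin : E.Finite) (hE : ¬ P E) :
    ∃ F ⊆ E, π '' F = π '' E ∧ Set.InjOn π F ∧ ¬ P F := by
  obtain ⟨F, ⟨hFE, himage, hF⟩, hmin⟩ :=
    (hfin.finite_subsets.subset fun F hF => hF.1 :
      {F | F ⊆ E ∧ π '' F = π '' E ∧ ¬ P F}.Finite).exists_minimal ⟨E, subset_rfl, rfl, hE⟩
  have removable : ∀ e ∈ F, ∀ f ∈ F, π e = π f → e ≠ f → P (F \ {e}) := by
    intro e he f hf hef hne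
    have himage_diff : π '' (F \ {e}) = π '' F := by
      refine (Set.image_mono Set.sdiff_subset).antisymm ?_
      rintro _ ⟨g, hg, rfl⟩
      by_cases hge : g = e
      · exact ⟨f, ⟨hf, hne.symm⟩, by rw [hge, hef]⟩
      · exact ⟨g, ⟨hg, hge⟩, rfl⟩
    by_contra hnot
    exact (hmin ⟨Set.sdiff_subset.trans hFE, himage_diff.trans himage, hnot⟩
      Set.sdiff_subset he).2 rfl
  refine ⟨F, hFE, himage, fun e he f hf hef => ?_, hF⟩
  by_contra hne
  have hagree : ∀ g, π g ≠ π e → (g ∈ F \ {e} ↔ g ∈ F \ {f}) := by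
    intro g hg
    have hge : g ≠ e := fun h => hg (congrArg π h)
    have hgf : g ≠ f := fun h => hg ((congrArg π h).trans hef.symm)
    simp [hge, hgf]
  have hunion : F \ {e} ∪ F \ {f} = F := by
    rw [← Set.sdiff_inter, Set.singleton_inter_eq_empty.mpr (by simpa using hne), Set.sdiff_empty]
  exact hF (hunion ▸ hP (π e) _ _ hagree (removable e he f hf hef hne)
    (removable f hf e he hef.symm (Ne.symm hne)))

/-- The coordinates of `d` differ pairwise by at most `C`. For the vector of color counts of a
finite history this bounds all the differences `diff_{a,b}`. -/
def SpreadLE {ι : Type*} (C : ℕ) (d : ι → ℤ) : Prop :=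
  ∀ a b, |d a - d b| ≤ (C : ℤ)

namespace SpreadLE

variable {ι : Type*} {C D : ℕ} {x y : ι → ℤ}

theorem add (hx : SpreadLE C x) (hy : SpreadLE D y) : SpreadLE (C + D) (x + y) := by
  intro a b
  calc |(x + y) a - (x + y) b| = |(x a - x b) + (y a - y b)| := by
        simp only [Pi.add_apply, add_sub_add_comm]
    _ ≤ |x a - x b| + |y a - y b| := abs_add_le _ _
    _ ≤ ((C + D : ℕ) : ℤ) := by push_cast; exact add_le_add (hx a b) (hy a b)

theorem neg (hx : SpreadLE C x) : SpreadLE C (-x) := by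
  intro a b
  simpa [neg_add_eq_sub] using hx b a

theorem sub (hx : SpreadLE C x) (hy : SpreadLE D y) : SpreadLE (C + D) (x - y) :=
  sub_eq_add_neg x y ▸ hx.add hy.neg

end SpreadLE

theorem cnt_succ {k : ℕ} (x : ℕ → Fin k) (a : Fin k) (n : ℕ) :
    cnt x a (n + 1) = cnt x a n + if x n = a then 1 else 0 := by
  rw [cnt, Finset.range_add_one, Finset.filter_insert]
  split_ifs <;> simp [cnt]

namespace Arena

variable {V : Type} {k : ℕ} {A : Arena V k}

section Histories

variable {l : List (V × Fin k × V)} {e : V × Fin k × V} {p : ℕ → V × Fin k × V}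
  {inP : V → Prop} {σ τ : List (V × Fin k × V) → V × Fin k × V}

theorem lastNode_concat (A : Arena V k) (l : List (V × Fin k × V)) (e : V × Fin k × V) :
    A.lastNode (l ++ [e]) = e.2.2 := by
  simp [lastNode]

theorem isHistory_nil (A : Arena V k) : A.IsHistory [] :=
  ⟨by simp, List.isChain_nil, by simp⟩

theorem IsHistory.concat (hl : A.IsHistory l) (he : e ∈ A.E) (hsource : e.1 = A.lastNode l) :
    A.IsHistory (l ++ [e]) := by
  refine ⟨List.forall_mem_append.mpr ⟨hl.1, List.forall_mem_singleton.mpr he⟩, ?_⟩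
  rcases l.eq_nil_or_concat with rfl | ⟨l, f, rfl⟩
  · exact ⟨List.isChain_singleton e, by simpa [lastNode] using hsource⟩
  · rw [List.concat_eq_append] at hl hsource ⊢
    rw [lastNode_concat] at hsource
    refine ⟨List.isChain_append.mpr ⟨hl.2.1, List.isChain_singleton e, ?_⟩, ?_⟩
    · simpa using hsource.symm
    · simpa using hl.2.2

theorem IsPlay.lastNode_playPrefix (hp : A.IsPlay p) (n : ℕ) :
    A.lastNode (playPrefix p n) = (p n).1 := by
  cases n with
  | zero => exact hp.1.symm
  | succ n => rw [playPrefix_succ, lastNode_concat, (hp.2 n).2]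

theorem IsPlay.consistent_iff (hp : A.IsPlay p) :
    A.Consistent inP σ p ↔ ∀ n, inP (p n).1 → p n = σ (playPrefix p n) := by
  constructor
  · rintro ⟨hzero, hsucc⟩ n hn
    cases n with
    | zero => exact hzero (hp.1 ▸ hn)
    | succ n => exact hsucc n ((hp.2 n).2 ▸ hn)
  · intro h
    exact ⟨fun hini => h 0 (hp.1.symm ▸ hini), fun n hn => h (n + 1) ((hp.2 n).2 ▸ hn)⟩

theorem isPlay_of_eq_apply_playPrefix (hσ : A.IsStrategy (fun _ => True) σ)
    (hp : ∀ n, p n = σ (playPrefix p n)) : A.IsPlay p := by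
  have move : ∀ n, A.IsHistory (playPrefix p n) →
      p n ∈ A.E ∧ (p n).1 = A.lastNode (playPrefix p n) :=
    fun n hn => hp n ▸ hσ _ hn trivial
  have history : ∀ n, A.IsHistory (playPrefix p n) := by
    intro n
    induction n with
    | zero => exact A.isHistory_nil
    | succ n ih => rw [playPrefix_succ]; exact ih.concat (move n ih).1 (move n ih).2
  refine ⟨(move 0 (history 0)).2, fun n => ⟨(move n (history n)).1, ?_⟩⟩
  rw [(move (n + 1) (history (n + 1))).2, playPrefix_succ, lastNode_concat]

theorem exists_isPlay_consistent (hσ : A.IsStrategy A.isV0 σ) (hτ : A.IsStrategy A.isV1 τ) :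
    ∃ p, A.IsPlay p ∧ A.Consistent A.isV0 σ p ∧ A.Consistent A.isV1 τ p := by
  classical
  let ρ : List (V × Fin k × V) → V × Fin k × V := fun l =>
    if A.isV1 (A.lastNode l) then τ l else σ l
  have hρ : A.IsStrategy (fun _ => True) ρ := by
    intro l hl _
    by_cases h1 : A.isV1 (A.lastNode l)
    · simpa only [ρ, if_pos h1] using hτ l hl h1
    · simpa only [ρ, if_neg h1] using hσ l hl h1
  obtain ⟨p, hpρ⟩ := exists_eq_apply_playPrefix ρ
  have hp := isPlay_of_eq_apply_playPrefix hρ hpρ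
  refine ⟨p, hp, hp.consistent_iff.mpr fun n h0 => ?_, hp.consistent_iff.mpr fun n h1 => ?_⟩
  · exact (hpρ n).trans (if_neg (hp.lastNode_playPrefix n ▸ h0))
  · exact (hpρ n).trans (if_pos (hp.lastNode_playPrefix n ▸ h1))

theorem WinningFor0.not_winningFor1 {W : Set (ℕ → Fin k)} (hσ : A.WinningFor0 W σ) :
    ¬ A.WinningFor1 W τ := by
  intro hτ
  obtain ⟨p, hp, hpσ, hpτ⟩ := exists_isPlay_consistent hσ.1 hτ.1
  exact hτ.2 p hp hpτ (hσ.2 p hp hpσ)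

/-- The Parikh vector of a finite history: how often each color occurs on its edges. It is
integer-valued so that Parikh vectors can be subtracted. -/
def parikh (l : List (V × Fin k × V)) : Fin k → ℤ :=
  (l.map fun e => Pi.single e.2.1 1).sum

theorem parikh_concat (l : List (V × Fin k × V)) (e : V × Fin k × V) :
    parikh (l ++ [e]) = parikh l + Pi.single e.2.1 1 := by
  simp [parikh]

theorem parikh_playPrefix (p : ℕ → V × Fin k × V) (n : ℕ) (a : Fin k) :
    parikh (playPrefix p n) a = cnt (colorSeq p) a n := by
  induction n with
  | zero => simp [parikh, playPrefix, cnt]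
  | succ n ih =>
    rw [playPrefix_succ, parikh_concat, Pi.add_apply, ih, cnt_succ]
    simp [Pi.single_apply, colorSeq, eq_comm]

theorem boundedSeq_colorSeq_iff :
    BoundedSeq (colorSeq p) ↔ ∃ C, ∀ n, SpreadLE C (parikh (playPrefix p n)) := by
  simp only [BoundedSeq, diffSeq, SpreadLE, parikh_playPrefix]
  exact exists_congr fun C => ⟨fun h n a b => h a b n, fun h a b n => h n a b⟩

end Histories

section Invariants

variable {F F₁ F₂ : Set (V × Fin k × V)} {S S₁ S₂ : Set (V × (Fin k → ℤ))}
  {u : V} {d x y : Fin k → ℤ} {p : ℕ → V × Fin k × V}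

/-- The configuration reached by a finite history: its last node together with its Parikh
vector. -/
def config (A : Arena V k) (l : List (V × Fin k × V)) : V × (Fin k → ℤ) :=
  (A.lastNode l, parikh l)

/-- The configuration reached by traversing the edge `e` when the Parikh vector is `d`. -/
def advance (d : Fin k → ℤ) (e : V × Fin k × V) : V × (Fin k → ℤ) :=
  (e.2.2, d + Pi.single e.2.1 1)

theorem IsPlay.config_playPrefix (hp : A.IsPlay p) (n : ℕ) :
    A.config (playPrefix p n) = ((p n).1, parikh (playPrefix p n)) := by
  rw [config, hp.lastNode_playPrefix]

theorem config_playPrefix_succ (A : Arena V k) (p : ℕ → V × Fin k × V) (n : ℕ) :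
    A.config (playPrefix p (n + 1)) = advance (parikh (playPrefix p n)) (p n) := by
  rw [playPrefix_succ, config, lastNode_concat, parikh_concat, advance]

/-- The edges on which player 1 chooses. -/
def player1Moves (A : Arena V k) : Set (V × Fin k × V) :=
  {e ∈ A.E | A.isV1 e.1}

/-- `S` is a set of configurations in which player 0 can stay forever from the start of the game,
provided that player 1 moves only along the edges in `F`. -/
structure IsInvariant (A : Arena V k) (F : Set (V × Fin k × V)) (S : Set (V × (Fin k → ℤ))) :
    Prop where
  initial : (A.vini, 0) ∈ S
  exists_move : ∀ v d, (v, d) ∈ S → ¬ A.isV1 v → ∃ e ∈ A.E, e.1 = v ∧ advance d e ∈ S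
  closed : ∀ e ∈ F, ∀ d, (e.1, d) ∈ S → advance d e ∈ S

/-- Player 0 can keep the color differences uniformly bounded, as witnessed by an invariant, when
player 1 moves only along the edges in `F`. -/
def HasBoundedInvariant (A : Arena V k) (F : Set (V × Fin k × V)) : Prop :=
  ∃ S, A.IsInvariant F S ∧ ∃ C, ∀ v d, (v, d) ∈ S → SpreadLE C d

/-- The configurations of two plays run alternately, one of them always waiting at `u`. The second
play starts at `u` with the Parikh vector `d`, so the contribution `d` of its skipped beginning is
subtracted from the sum of the two Parikh vectors. -/
def interleaving (S₁ S₂ : Set (V × (Fin k → ℤ))) (u : V) (d : Fin k → ℤ) :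
    Set (V × (Fin k → ℤ)) :=
  {c | ∃ x y, c.2 = x + y - d ∧ ((c.1, x) ∈ S₁ ∧ (u, y) ∈ S₂ ∨ (u, x) ∈ S₁ ∧ (c.1, y) ∈ S₂)}

theorem advance_mem_interleaving_left {e : V × Fin k × V} (hx : advance x e ∈ S₁)
    (hy : (u, y) ∈ S₂) : advance (x + y - d) e ∈ interleaving S₁ S₂ u d :=
  ⟨x + Pi.single e.2.1 1, y, by simp only [advance]; abel, .inl ⟨hx, hy⟩⟩

theorem advance_mem_interleaving_right {e : V × Fin k × V} (hx : (u, x) ∈ S₁)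
    (hy : advance y e ∈ S₂) : advance (x + y - d) e ∈ interleaving S₁ S₂ u d :=
  ⟨x, y + Pi.single e.2.1 1, by simp only [advance]; abel, .inr ⟨hx, hy⟩⟩

theorem IsInvariant.interleaving (h₁ : A.IsInvariant F₁ S₁) (h₂ : A.IsInvariant F₂ S₂)
    (hF : ∀ e, e.1 ≠ u → (e ∈ F₁ ↔ e ∈ F₂)) (hd : (u, d) ∈ S₂) :
    A.IsInvariant (F₁ ∪ F₂) (interleaving S₁ S₂ u d) where
  initial := ⟨0, d, by simp, .inl ⟨h₁.initial, hd⟩⟩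
  exists_move := by
    rintro v _ ⟨x, y, rfl, ⟨hx, hy⟩ | ⟨hx, hy⟩⟩ hv
    · obtain ⟨e, he, hsource, hmem⟩ := h₁.exists_move v x hx hv
      exact ⟨e, he, hsource, advance_mem_interleaving_left hmem hy⟩
    · obtain ⟨e, he, hsource, hmem⟩ := h₂.exists_move v y hy hv
      exact ⟨e, he, hsource, advance_mem_interleaving_right hx hmem⟩
  closed := by
    -- A move unavailable to the active play leaves `u`, where the other play is waiting to make it.
    rintro e he _ ⟨x, y, rfl, ⟨hx, hy⟩ | ⟨hx, hy⟩⟩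
    · by_cases he₁ : e ∈ F₁
      · exact advance_mem_interleaving_left (h₁.closed e he₁ x hx) hy
      · have he₂ : e ∈ F₂ := he.resolve_left he₁
        obtain rfl : e.1 = u := by_contra fun hu => he₁ ((hF e hu).mpr he₂)
        exact advance_mem_interleaving_right hx (h₂.closed e he₂ y hy)
    · by_cases he₂ : e ∈ F₂
      · exact advance_mem_interleaving_right hx (h₂.closed e he₂ y hy)
      · have he₁ : e ∈ F₁ := he.resolve_right he₂
        obtain rfl : e.1 = u := by_contra fun hu => he₂ ((hF e hu).mp he₁)
        exact advance_mem_interleaving_left (h₁.closed e he₁ x hx) hy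

theorem spreadLE_of_mem_interleaving {C₁ C₂ : ℕ} (h₁ : ∀ v d, (v, d) ∈ S₁ → SpreadLE C₁ d)
    (h₂ : ∀ v d, (v, d) ∈ S₂ → SpreadLE C₂ d) (hd : SpreadLE C₂ d) :
    ∀ v w, (v, w) ∈ interleaving S₁ S₂ u d → SpreadLE (C₁ + C₂ + C₂) w := by
  rintro v _ ⟨x, y, rfl, ⟨hx, hy⟩ | ⟨hx, hy⟩⟩ <;>
    exact ((h₁ _ x hx).add (h₂ _ y hy)).sub hd

theorem HasBoundedInvariant.union (hF : ∀ e, e.1 ≠ u → (e ∈ F₁ ↔ e ∈ F₂))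
    (h₁ : A.HasBoundedInvariant F₁) (h₂ : A.HasBoundedInvariant F₂) :
    A.HasBoundedInvariant (F₁ ∪ F₂) := by
  obtain ⟨S₁, hS₁, C₁, hC₁⟩ := h₁
  obtain ⟨S₂, hS₂, C₂, hC₂⟩ := h₂
  by_cases hreach : ∃ d, (u, d) ∈ S₂
  · obtain ⟨d, hd⟩ := hreach
    exact ⟨_, hS₁.interleaving hS₂ hF hd, _, spreadLE_of_mem_interleaving hC₁ hC₂ (hC₂ u d hd)⟩
  · have closed : ∀ e ∈ F₁ ∪ F₂, ∀ d, (e.1, d) ∈ S₂ → advance d e ∈ S₂ := by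
      intro e he d hd
      have hu : e.1 ≠ u := fun hu => hreach ⟨d, hu ▸ hd⟩
      exact hS₂.closed e (he.elim (hF e hu).mp id) d hd
    exact ⟨S₂, ⟨hS₂.initial, hS₂.exists_move, closed⟩, C₂, hC₂⟩

theorem HasBoundedInvariant.of_isPlay (hF : F ⊆ A.player1Moves) (hinj : Set.InjOn Prod.fst F)
    (hp : A.IsPlay p) (hpF : ∀ n, A.isV1 (p n).1 → p n ∈ F) (hb : BoundedSeq (colorSeq p)) :
    A.HasBoundedInvariant F := by
  obtain ⟨C, hC⟩ := boundedSeq_colorSeq_iff.mp hb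
  have config_iff : ∀ v d, (v, d) ∈ Set.range (fun n => A.config (playPrefix p n)) ↔
      ∃ n, (p n).1 = v ∧ parikh (playPrefix p n) = d := by
    simp [hp.config_playPrefix]
  refine ⟨Set.range fun n => A.config (playPrefix p n), ⟨⟨0, rfl⟩, ?_, ?_⟩, C, ?_⟩
  · intro v d hmem _
    obtain ⟨n, rfl, rfl⟩ := (config_iff v d).mp hmem
    exact ⟨p n, (hp.2 n).1, rfl, n + 1, A.config_playPrefix_succ p n⟩
  · intro e he d hmem
    obtain ⟨n, hn, rfl⟩ := (config_iff _ d).mp hmem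
    have hpn : p n ∈ F := hpF n (hn ▸ (hF he).2)
    obtain rfl : p n = e := hinj hpn he hn
    exact ⟨n + 1, A.config_playPrefix_succ p n⟩
  · intro v d hmem
    obtain ⟨n, -, rfl⟩ := (config_iff v d).mp hmem
    exact hC n

end Invariants

theorem HasBoundedInvariant.exists_winningFor0 (h : A.HasBoundedInvariant A.player1Moves) :
    ∃ σ, A.WinningFor0 {x | BoundedSeq x} σ := by
  obtain ⟨S, hS, C, hC⟩ := h
  have exists_move : ∀ c : V × (Fin k → ℤ), ∃ e ∈ A.E, e.1 = c.1 ∧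
      (c ∈ S → ¬ A.isV1 c.1 → advance c.2 e ∈ S) := by
    rintro ⟨v, d⟩
    by_cases hc : (v, d) ∈ S ∧ ¬ A.isV1 v
    · obtain ⟨e, he, hsource, hmem⟩ := hS.exists_move v d hc.1 hc.2
      exact ⟨e, he, hsource, fun _ _ => hmem⟩
    · obtain ⟨e, he, hsource⟩ := A.serial v
      exact ⟨e, he, hsource, fun hcS hv => (hc ⟨hcS, hv⟩).elim⟩
  choose g hgE hgsource hgmem using exists_move
  refine ⟨fun l => g (A.config l), fun l _ _ => ⟨hgE _, hgsource _⟩, fun p hp hcons => ?_⟩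
  have config_mem : ∀ n, A.config (playPrefix p n) ∈ S := by
    intro n
    induction n with
    | zero => exact hS.initial
    | succ n ih =>
      rw [config_playPrefix_succ]
      by_cases hn : A.isV1 (p n).1
      · exact hS.closed _ ⟨(hp.2 n).1, hn⟩ _ (hp.config_playPrefix n ▸ ih)
      · rw [hp.consistent_iff.mp hcons n hn]
        exact hgmem _ ih (by rwa [hp.config_playPrefix])
  exact boundedSeq_colorSeq_iff.mpr ⟨C, fun n => hC _ _ (config_mem n)⟩

theorem winningFor1_of_not_hasBoundedInvariant {F : Set (V × Fin k × V)} {f : V → V × Fin k × V}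
    (hF : F ⊆ A.player1Moves) (hinj : Set.InjOn Prod.fst F)
    (hf : ∀ v, A.isV1 v → f v ∈ F ∧ (f v).1 = v) (h : ¬ A.HasBoundedInvariant F) :
    A.WinningFor1 {x | BoundedSeq x} fun l => f (A.lastNode l) := by
  refine ⟨fun l _ hl => ⟨(hF (hf _ hl).1).1, (hf _ hl).2⟩, fun p hp hcons hb => ?_⟩
  refine h (.of_isPlay hF hinj hp (fun n hn => ?_) hb)
  rw [hp.consistent_iff.mp hcons n hn, hp.lastNode_playPrefix]
  exact (hf _ hn).1

theorem exists_winningFor1_memoryless (hfin : A.player1Moves.Finite)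
    (h : ¬ A.HasBoundedInvariant A.player1Moves) :
    ∃ τ, A.WinningFor1 {x | BoundedSeq x} τ ∧ A.Memoryless τ := by
  obtain ⟨F, hF, himage, hinj, hnot⟩ := exists_injOn_subset_not_of_union Prod.fst
    (fun u F₁ F₂ hagree => HasBoundedInvariant.union hagree) hfin h
  have exists_move : ∀ v, ∃ e : V × Fin k × V, A.isV1 v → e ∈ F ∧ e.1 = v := by
    intro v
    obtain ⟨e, he, rfl⟩ := A.serial v
    by_cases hv : A.isV1 e.1
    · obtain ⟨f, hf, hfe⟩ : e.1 ∈ Prod.fst '' F := himage ▸ ⟨e, ⟨he, hv⟩, rfl⟩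
      exact ⟨f, fun _ => ⟨hf, hfe⟩⟩
    · exact ⟨e, fun h1 => (hv h1).elim⟩
  choose f hf using exists_move
  exact ⟨_, winningFor1_of_not_hasBoundedInvariant hF hinj hf hnot,
    fun l l' _ _ hlast => congrArg f hlast⟩

end Arena

theorem bounded_goal_determined_and_memoryless_for_player1_general
    {k : ℕ} {V : Type} (A : Arena V k) (hfin : A.player1Moves.Finite) :
    ((∃ σ, A.WinningFor0 {x | BoundedSeq x} σ) ∨
        (∃ τ, A.WinningFor1 {x | BoundedSeq x} τ)) ∧
      ((∃ τ, A.WinningFor1 {x | BoundedSeq x} τ) →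
        ∃ τ, A.WinningFor1 {x | BoundedSeq x} τ ∧ A.Memoryless τ) := by
  by_cases h : A.HasBoundedInvariant A.player1Moves
  · obtain ⟨σ, hσ⟩ := h.exists_winningFor0
    exact ⟨.inl ⟨σ, hσ⟩, fun ⟨_, hτ⟩ => (hσ.not_winningFor1 hτ).elim⟩
  · obtain ⟨τ, hτ, hmemoryless⟩ := Arena.exists_winningFor1_memoryless hfin h
    exact ⟨.inr ⟨τ, hτ⟩, fun _ => ⟨τ, hτ, hmemoryless⟩⟩

theorem bounded_goal_determined_and_memoryless_for_player1
    {k : ℕ} (hk : 1 ≤ k) {V : Type} [Fintype V] (A : Arena V k) :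
    ((∃ σ, A.WinningFor0 {x | BoundedSeq x} σ) ∨
        (∃ τ, A.WinningFor1 {x | BoundedSeq x} τ)) ∧
      ((∃ τ, A.WinningFor1 {x | BoundedSeq x} τ) →
        ∃ τ, A.WinningFor1 {x | BoundedSeq x} τ ∧ A.Memoryless τ) :=
  bounded_goal_determined_and_memoryless_for_player1_general A (Set.toFinite _)
end
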